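/- Let R be a commutative ring with unit containing the field of rational numbers, V an R-module, S = Sym_R(V) with its standard bialgebra structure (Δ(x) = x⊗1 + 1⊗x for x ∈ V), δ' : V → S ⊗_R S an R-linear map, and δ : S → S ⊗_R S its extension determined by the (m,δ)-compatibility δ(ab) = δ(a)·Δ(b) + Δ(a)·δ(b) and δ(1) = 0. If δ' satisfies the co-Leibniz rule (id⊗Δ)∘δ' = (δ'⊗id + σ_{1,2}∘(id⊗δ'))∘Δ on V, then δ satisfies the co-Leibniz rule (id⊗Δ)∘δ = (δ⊗id + σ_{1,2}∘(id⊗δ))∘Δ on all of S. -/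

import Mathlib

/-!
Both sides of the co-Leibniz rule are derivations `S → S ⊗ S ⊗ S` along one and the same algebra
homomorphism, the iterated coproduct `(id ⊗ Δ) ∘ Δ`, so they agree as soon as they agree on
generators. For `δ ⊗ id` this uses coassociativity, for `σ₁₂ ∘ (id ⊗ δ)` also cocommutativity.
When primitive elements generate `S`, both properties of `Δ` can be checked on them.
-/

noncomputable section

open MvPolynomial in
/-- The ideal of linearity relations presenting the symmetric algebra of the module `V`
as a quotient of the polynomial algebra on the set `V`. -/
def symIdeal (R V : Type) [CommRing R] [AddCommGroup V] [Module R V] :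
    Ideal (MvPolynomial V R) :=
  Ideal.span
    ({p | ∃ v w : V, p = X (v + w) - X v - X w} ∪
     {p | ∃ (r : R) (v : V), p = X (r • v) - C r * X v})

/-- The symmetric algebra `Sym_R(V)` of an `R`-module `V`. -/
abbrev SymmAlg (R V : Type) [CommRing R] [AddCommGroup V] [Module R V] : Type :=
  MvPolynomial V R ⧸ symIdeal R V

open MvPolynomial in
/-- The canonical linear inclusion `V → Sym_R(V)`. -/
def symι (R V : Type) [CommRing R] [AddCommGroup V] [Module R V] :
    V →ₗ[R] SymmAlg R V where
  toFun v := Ideal.Quotient.mk (symIdeal R V) (X v)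
  map_add' v w := by
    rw [← map_add, Ideal.Quotient.eq]
    exact Ideal.subset_span (Or.inl ⟨v, w, by ring⟩)
  map_smul' r v := by
    simp only [RingHom.id_apply]
    rw [show r • (Ideal.Quotient.mk (symIdeal R V)) (X v)
          = Ideal.Quotient.mk (symIdeal R V) (r • X v) from
        (map_smul (Ideal.Quotient.mkₐ R (symIdeal R V)) r (X v)).symm]
    rw [show r • (X v : MvPolynomial V R) = C r * X v from by rw [smul_eq_C_mul]]
    rw [Ideal.Quotient.eq]
    exact Ideal.subset_span (Or.inr ⟨r, v, by ring⟩)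


open scoped TensorProduct

section TensorOps
variable (R S : Type) [CommRing R] [AddCommGroup S] [Module R S]

/-- The operator exchanging the first two factors of a threefold tensor product. -/
def sigma12 : S ⊗[R] (S ⊗[R] S) →ₗ[R] S ⊗[R] (S ⊗[R] S) :=
  (TensorProduct.assoc R S S S).toLinearMap ∘ₗ
    (LinearMap.rTensor S (TensorProduct.comm R S S).toLinearMap) ∘ₗ
      (TensorProduct.assoc R S S S).symm.toLinearMap

/-- The operator exchanging the last two factors of a threefold tensor product. -/
def sigma23 : S ⊗[R] (S ⊗[R] S) →ₗ[R] S ⊗[R] (S ⊗[R] S) :=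
  LinearMap.lTensor S (TensorProduct.comm R S S).toLinearMap

/-- The cyclic permutation `τ = σ₂₃ ∘ σ₁₂` of a threefold tensor product. -/
def tau3 : S ⊗[R] (S ⊗[R] S) →ₗ[R] S ⊗[R] (S ⊗[R] S) :=
  sigma23 R S ∘ₗ sigma12 R S

variable {R S}

/-- `f ⊗ id : S ⊗ S → (S ⊗ S) ⊗ S ≃ S ⊗ (S ⊗ S)` for `f : S → S ⊗ S`. -/
def lmapTensorId (f : S →ₗ[R] S ⊗[R] S) : S ⊗[R] S →ₗ[R] S ⊗[R] (S ⊗[R] S) :=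
  (TensorProduct.assoc R S S S).toLinearMap ∘ₗ LinearMap.rTensor S f

/-- `id ⊗ f : S ⊗ S → S ⊗ (S ⊗ S)` for `f : S → S ⊗ S`. -/
def idTensorLmap (f : S →ₗ[R] S ⊗[R] S) : S ⊗[R] S →ₗ[R] S ⊗[R] (S ⊗[R] S) :=
  LinearMap.lTensor S f

end TensorOps

section IsDerivationAlong

variable {R A B C : Type*} [CommSemiring R]

/-- `f : A → B` is a derivation along the algebra homomorphism `g : A → B`, that is, a derivation
into `B` viewed as an `A`-bimodule through `g`. Unlike in Mathlib's `Derivation`, the algebras need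
not be commutative. -/
def IsDerivationAlong [Semiring A] [Semiring B] [Algebra R A] [Algebra R B]
    (g : A →ₐ[R] B) (f : A →ₗ[R] B) : Prop :=
  ∀ a b, f (a * b) = f a * g b + g a * f b

namespace IsDerivationAlong

section Semiring

variable [Semiring A] [Semiring B] [Semiring C] [Algebra R A] [Algebra R B] [Algebra R C]
  {g : A →ₐ[R] B} {f f' : A →ₗ[R] B}

theorem add (hf : IsDerivationAlong g f) (hf' : IsDerivationAlong g f') :
    IsDerivationAlong g (f + f') := fun a b ↦ by
  simp only [LinearMap.add_apply, hf a b, hf' a b, add_mul, mul_add]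
  abel

theorem algHom_comp (hf : IsDerivationAlong g f) (h : B →ₐ[R] C) :
    IsDerivationAlong (h.comp g) (h.toLinearMap ∘ₗ f) := fun a b ↦ by
  simp [hf a b]

theorem comp_algHom (hf : IsDerivationAlong g f) (h : C →ₐ[R] A) :
    IsDerivationAlong (g.comp h) (f ∘ₗ h.toLinearMap) := fun a b ↦ by
  simp [hf (h a) (h b)]

theorem lTensor (hf : IsDerivationAlong g f) :
    IsDerivationAlong (Algebra.TensorProduct.map (AlgHom.id R C) g) (f.lTensor C) := by
  intro u v
  induction u with
  | zero => simp
  | add u₁ u₂ h₁ h₂ => simp only [add_mul, map_add, h₁, h₂]; abel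
  | tmul c a =>
    induction v with
    | zero => simp
    | add v₁ v₂ h₁ h₂ => simp only [mul_add, map_add, h₁, h₂]; abel
    | tmul d b => simp [hf a b, TensorProduct.tmul_add]

theorem rTensor (hf : IsDerivationAlong g f) :
    IsDerivationAlong (Algebra.TensorProduct.map g (AlgHom.id R C)) (f.rTensor C) := by
  intro u v
  induction u with
  | zero => simp
  | add u₁ u₂ h₁ h₂ => simp only [add_mul, map_add, h₁, h₂]; abel
  | tmul a c =>
    induction v with
    | zero => simp
    | add v₁ v₂ h₁ h₂ => simp only [mul_add, map_add, h₁, h₂]; abel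
    | tmul b d => simp [hf a b, TensorProduct.add_tmul]

end Semiring

section Ring

variable [Semiring A] [Ring B] [Algebra R A] [Algebra R B] {g : A →ₐ[R] B} {f f' : A →ₗ[R] B}

theorem map_one (hf : IsDerivationAlong g f) : f 1 = 0 := by
  simpa using hf 1 1

theorem ext_of_adjoin_eq_top {X : Set A} (hX : Algebra.adjoin R X = ⊤)
    (hf : IsDerivationAlong g f) (hf' : IsDerivationAlong g f') (h : X.EqOn f f') : f = f' := by
  ext a
  have ha : a ∈ Algebra.adjoin R X := hX ▸ Algebra.mem_top
  induction ha using Algebra.adjoin_induction with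
  | mem x hx => exact h hx
  | algebraMap r =>
    simp only [Algebra.algebraMap_eq_smul_one, map_smul, hf.map_one, hf'.map_one]
  | add a b _ _ ha hb => rw [map_add, map_add, ha, hb]
  | mul a b _ _ ha hb => rw [hf a b, hf' a b, ha, hb]

end Ring

end IsDerivationAlong

end IsDerivationAlong

section CocommutativeMap

variable {R S : Type} [CommRing R] [AddCommGroup S] [Module R S]

theorem sigma12_comp_lmapTensorId (f : S →ₗ[R] S ⊗[R] S) :
    sigma12 R S ∘ₗ lmapTensorId f
      = lmapTensorId ((TensorProduct.comm R S S).toLinearMap ∘ₗ f) := by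
  ext a b
  simp [sigma12, lmapTensorId]

theorem sigma12_idTensorLmap_of_coassoc_of_cocomm {f : S →ₗ[R] S ⊗[R] S}
    (hcoassoc : ∀ a, lmapTensorId f (f a) = idTensorLmap f (f a))
    (hcocomm : ∀ a, TensorProduct.comm R S S (f a) = f a) (a : S) :
    sigma12 R S (idTensorLmap f (f a)) = idTensorLmap f (f a) := by
  have hcomm : (TensorProduct.comm R S S).toLinearMap ∘ₗ f = f := LinearMap.ext hcocomm
  rw [← hcoassoc, ← LinearMap.comp_apply, sigma12_comp_lmapTensorId, hcomm]

end CocommutativeMap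

section Coproduct

variable {R S : Type} [CommRing R] [Ring S] [Algebra R S] {Δ : S →ₐ[R] S ⊗[R] S}

theorem sigma12_eq_leftComm :
    sigma12 R S = (Algebra.TensorProduct.leftComm R S S S).toAlgHom.toLinearMap := by
  ext a b c
  rfl

variable (Δ) in
/-- The iterated coproduct `(id ⊗ Δ) ∘ Δ : S → S ⊗ S ⊗ S`. -/
def iteratedComul : S →ₐ[R] S ⊗[R] (S ⊗[R] S) :=
  (Algebra.TensorProduct.map (AlgHom.id R S) Δ).comp Δ

namespace IsDerivationAlong

variable {δ : S →ₗ[R] S ⊗[R] S}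

theorem idTensorLmap_comul_comp (hδ : IsDerivationAlong Δ δ) :
    IsDerivationAlong (iteratedComul Δ) (idTensorLmap Δ.toLinearMap ∘ₗ δ) :=
  hδ.algHom_comp (Algebra.TensorProduct.map (AlgHom.id R S) Δ)

theorem lmapTensorId_comp_comul (hδ : IsDerivationAlong Δ δ)
    (hcoassoc : ∀ a, lmapTensorId Δ.toLinearMap (Δ a) = idTensorLmap Δ.toLinearMap (Δ a)) :
    IsDerivationAlong (iteratedComul Δ) (lmapTensorId δ ∘ₗ Δ.toLinearMap) := by
  let assoc := (Algebra.TensorProduct.assoc R R R S S S).toAlgHom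
  have hΔ : (assoc.comp (Algebra.TensorProduct.map Δ (AlgHom.id R S))).comp Δ = iteratedComul Δ :=
    AlgHom.ext hcoassoc
  exact hΔ ▸ (hδ.rTensor.algHom_comp assoc).comp_algHom Δ

theorem sigma12_idTensorLmap_comp_comul (hδ : IsDerivationAlong Δ δ)
    (hcoassoc : ∀ a, lmapTensorId Δ.toLinearMap (Δ a) = idTensorLmap Δ.toLinearMap (Δ a))
    (hcocomm : ∀ a, TensorProduct.comm R S S (Δ a) = Δ a) :
    IsDerivationAlong (iteratedComul Δ)
      (sigma12 R S ∘ₗ idTensorLmap δ ∘ₗ Δ.toLinearMap) := by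
  let leftComm := (Algebra.TensorProduct.leftComm R S S S).toAlgHom
  have hΔ : leftComm.comp (iteratedComul Δ) = iteratedComul Δ := AlgHom.ext fun a ↦
    (DFunLike.congr_fun sigma12_eq_leftComm _).symm.trans
      (sigma12_idTensorLmap_of_coassoc_of_cocomm hcoassoc hcocomm a)
  rw [sigma12_eq_leftComm]
  exact hΔ ▸ (hδ.lTensor.comp_algHom Δ).algHom_comp leftComm

end IsDerivationAlong

theorem coassoc_of_adjoin_primitive_eq_top {X : Set S} (hX : Algebra.adjoin R X = ⊤)
    (hΔ : ∀ x ∈ X, Δ x = x ⊗ₜ[R] 1 + 1 ⊗ₜ[R] x) (a : S) :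
    lmapTensorId Δ.toLinearMap (Δ a) = idTensorLmap Δ.toLinearMap (Δ a) := by
  let assoc := (Algebra.TensorProduct.assoc R R R S S S).toAlgHom
  have h : (assoc.comp (Algebra.TensorProduct.map Δ (AlgHom.id R S))).comp Δ = iteratedComul Δ :=
    AlgHom.ext_of_adjoin_eq_top hX fun x hx ↦ by
      simp [assoc, iteratedComul, hΔ x hx, Algebra.TensorProduct.one_def,
        TensorProduct.add_tmul, TensorProduct.tmul_add, add_assoc]
  exact DFunLike.congr_fun h a

theorem cocomm_of_adjoin_primitive_eq_top {X : Set S} (hX : Algebra.adjoin R X = ⊤)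
    (hΔ : ∀ x ∈ X, Δ x = x ⊗ₜ[R] 1 + 1 ⊗ₜ[R] x) (a : S) :
    TensorProduct.comm R S S (Δ a) = Δ a := by
  have h : (Algebra.TensorProduct.comm R S S).toAlgHom.comp Δ = Δ :=
    AlgHom.ext_of_adjoin_eq_top hX fun x hx ↦ by simp [hΔ x hx, add_comm]
  exact DFunLike.congr_fun h a

end Coproduct

theorem statement6_general {R S : Type} [CommRing R] [Ring S] [Algebra R S]
    {X : Set S} (hX : Algebra.adjoin R X = ⊤) (Δ : S →ₐ[R] S ⊗[R] S)
    (hcoassoc : ∀ a, lmapTensorId Δ.toLinearMap (Δ a) = idTensorLmap Δ.toLinearMap (Δ a))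
    (hcocomm : ∀ a, TensorProduct.comm R S S (Δ a) = Δ a)
    (δ : S →ₗ[R] S ⊗[R] S) (hδ : ∀ a b, δ (a * b) = δ a * Δ b + Δ a * δ b)
    (hcoleib : ∀ x ∈ X, idTensorLmap Δ.toLinearMap (δ x)
      = lmapTensorId δ (Δ x) + sigma12 R S (idTensorLmap δ (Δ x))) (a : S) :
    idTensorLmap Δ.toLinearMap (δ a)
      = lmapTensorId δ (Δ a) + sigma12 R S (idTensorLmap δ (Δ a)) := by
  have hder : IsDerivationAlong Δ δ := hδ
  have hright := (hder.lmapTensorId_comp_comul hcoassoc).add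
    (hder.sigma12_idTensorLmap_comp_comul hcoassoc hcocomm)
  exact DFunLike.congr_fun (hder.idTensorLmap_comul_comp.ext_of_adjoin_eq_top hX hright hcoleib) a

theorem adjoin_range_symι (R V : Type) [CommRing R] [AddCommGroup V] [Module R V] :
    Algebra.adjoin R (Set.range (symι R V)) = ⊤ := by
  have hrange : Set.range (symι R V)
      = Ideal.Quotient.mkₐ R (symIdeal R V) '' Set.range MvPolynomial.X :=
    Set.range_comp (Ideal.Quotient.mkₐ R (symIdeal R V)) MvPolynomial.X
  rw [hrange, ← AlgHom.map_adjoin, MvPolynomial.adjoin_range_X, Algebra.map_top,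
    (AlgHom.range_eq_top _).2 (Ideal.Quotient.mkₐ_surjective R _)]

/-- **Lemma 4.1(2).** Let `S = Sym_R(V)` with its standard bialgebra structure, and let
`δ : S → S ⊗ S` be the extension of a linear map `δ' : V → S ⊗ S` determined by the
`(m,δ)`-compatibility and `δ(1) = 0`.  If `δ'` satisfies the co-Leibniz rule
`(id⊗Δ)∘δ' = (δ'⊗id + σ₁₂∘(id⊗δ'))∘Δ` on `V`, then `δ` satisfies the co-Leibniz rule
on all of `S`. -/
theorem statement6 {R : Type} [CommRing R] [Algebra ℚ R]
    {V : Type} [AddCommGroup V] [Module R V]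
    (delta' : V →ₗ[R] SymmAlg R V ⊗[R] SymmAlg R V)
    (Delta : SymmAlg R V →ₐ[R] SymmAlg R V ⊗[R] SymmAlg R V)
    (hDelta : ∀ x : V, Delta (symι R V x) = symι R V x ⊗ₜ[R] 1 + 1 ⊗ₜ[R] symι R V x)
    (delta : SymmAlg R V →ₗ[R] SymmAlg R V ⊗[R] SymmAlg R V)
    (hext : ∀ x : V, delta (symι R V x) = delta' x)
    (hone : delta 1 = 0)
    (hcompat : ∀ a b : SymmAlg R V, delta (a * b) = delta a * Delta b + Delta a * delta b)
    (hcoleib' : ∀ x : V,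
      idTensorLmap Delta.toLinearMap (delta (symι R V x))
        = lmapTensorId delta (Delta (symι R V x))
          + sigma12 R (SymmAlg R V) (idTensorLmap delta (Delta (symι R V x)))) :
    ∀ a : SymmAlg R V,
      idTensorLmap Delta.toLinearMap (delta a)
        = lmapTensorId delta (Delta a)
          + sigma12 R (SymmAlg R V) (idTensorLmap delta (Delta a)) := by
  have hX := adjoin_range_symι R V
  have hprim : ∀ s ∈ Set.range (symι R V), Delta s = s ⊗ₜ[R] 1 + 1 ⊗ₜ[R] s :=
    Set.forall_mem_range.2 hDelta
  exact statement6_general hX Delta (coassoc_of_adjoin_primitive_eq_top hX hprim)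
    (cocomm_of_adjoin_primitive_eq_top hX hprim) delta hcompat (Set.forall_mem_range.2 hcoleib')

end
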